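/- Let A₀ be a ring with a nonzero divisor t ∈ A₀. Put A := A₀[1/t], Z := (1+tA₀)^{-1}A₀ (the (t)-adic Zariskization of A₀), and A' := Z[1/t]. Then the inclusion of A₀ into the integral closure (A₀)^+_A of A₀ in A induces a ring isomorphism from the integral closure of Z in A' onto the (t)-adic Zariskization (1 + t·(A₀)^+_A)^{-1}(A₀)^+_A of (A₀)^+_A. -/

import Mathlib

set_option maxHeartbeats 1000000
set_option synthInstance.maxHeartbeats 1000000

/-- The multiplicative set `1 + I` associated to an ideal `I`. -/
def oneAddSubmonoid {A : Type*} [CommRing A] (I : Ideal A) : Submonoid A where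
  carrier := {x | ∃ i ∈ I, x = 1 + i}
  one_mem' := ⟨0, Ideal.zero_mem I, by ring⟩
  mul_mem' := by
    rintro x y ⟨i, hi, rfl⟩ ⟨j, hj, rfl⟩
    exact ⟨i + j + i * j, I.add_mem (I.add_mem hi hj) (Ideal.mul_mem_left I i hj), by ring⟩

/-- The `I`-adic Zariskization `(1+I)⁻¹A` of a ring `A`. -/
abbrev Zariskization {A : Type*} [CommRing A] (I : Ideal A) : Type _ :=
  Localization (oneAddSubmonoid I)

section

variable {A₀ : Type*} [CommRing A₀] (t : A₀)

/-- The canonical ring homomorphism `A₀[1/t] → Z[1/t]`, where `Z` is the `(t)`-adic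
Zariskization of `A₀`. -/
noncomputable def awayToZarAway :
    Localization.Away t →+*
      Localization.Away (algebraMap A₀ (Zariskization (Ideal.span {t})) t) :=
  Localization.awayLift
    ((algebraMap (Zariskization (Ideal.span {t}))
        (Localization.Away (algebraMap A₀ (Zariskization (Ideal.span {t})) t))).comp
      (algebraMap A₀ (Zariskization (Ideal.span {t})))) t
    (IsLocalization.Away.algebraMap_isUnit (algebraMap A₀ (Zariskization (Ideal.span {t})) t))

end

theorem zar_aux_loc {R Z A A' : Type*} [CommRing R] [CommRing Z] [CommRing A] [CommRing A']
    [Algebra R Z] [Algebra R A] [Algebra R A'] [Algebra Z A'] [Algebra A A']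
    [IsScalarTower R Z A'] [IsScalarTower R A A'] (t : R)
    [IsLocalization (oneAddSubmonoid (Ideal.span {t})) Z]
    [IsLocalization (Algebra.algebraMapSubmonoid A (oneAddSubmonoid (Ideal.span {t}))) A']
    [Algebra (integralClosure R A) (integralClosure Z A')]
    [IsScalarTower (integralClosure R A) (integralClosure Z A') A']
    [IsScalarTower R (integralClosure R A) (integralClosure Z A')] :
    IsLocalization (oneAddSubmonoid (Ideal.span {algebraMap R (integralClosure R A) t}))
      (integralClosure Z A') := by
  have := IsLocalization.integralClosure (R := R) (S := A) (Rf := Z) (Sf := A')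
    (oneAddSubmonoid (Ideal.span {t}))
  refine IsLocalization.of_le (Algebra.algebraMapSubmonoid (integralClosure R A)
    (oneAddSubmonoid (Ideal.span {t}))) _ ?_ ?_
  · rintro _ ⟨_, ⟨i, hi, rfl⟩, rfl⟩
    obtain ⟨a, rfl⟩ := Ideal.mem_span_singleton'.1 hi
    exact ⟨algebraMap _ _ (a * t), Ideal.mem_span_singleton'.2
      ⟨algebraMap _ _ a, (map_mul _ _ _).symm⟩, by rw [map_add, map_one]⟩
  · rintro _ ⟨i, hi, rfl⟩
    obtain ⟨c, rfl⟩ := Ideal.mem_span_singleton'.1 hi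
    by_contra hu
    obtain ⟨m, hm, hmem⟩ := exists_max_ideal_of_mem_nonunits hu
    have hmax : (m.comap (algebraMap Z (integralClosure Z A'))).IsMaximal :=
      Ideal.isMaximal_comap_of_isIntegral_of_isMaximal m
    have htZ : algebraMap R Z t ∈ m.comap (algebraMap Z (integralClosure Z A')) := by
      have hj : algebraMap R Z t ∈ Ring.jacobson Z := by
        rw [← Ideal.jacobson_bot, Ideal.mem_jacobson_bot]
        intro z
        obtain ⟨⟨r, s⟩, hrs⟩ := IsLocalization.surj (oneAddSubmonoid (Ideal.span {t})) z
        obtain ⟨i, hi, hs⟩ := s.2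
        have hs' : IsUnit (algebraMap R Z (s : R)) := IsLocalization.map_units Z s
        refine isUnit_of_mul_isUnit_left (y := algebraMap R Z (s : R)) ?_
        have : (algebraMap R Z t * z + 1) * algebraMap R Z (s : R)
            = algebraMap R Z (1 + (i + t * r)) := by
          have h1 : algebraMap R Z (1 + (i + t * r)) =
            algebraMap R Z (s : R) + algebraMap R Z t * algebraMap R Z r := by
            rw [hs]; simp only [map_add, map_mul]; ring
          rw [h1, ← hrs]; ring
        rw [this]
        exact IsLocalization.map_units Z (⟨_, i + t * r, Ideal.add_mem _ hi
          (Ideal.mul_mem_right _ _ (Ideal.mem_span_singleton_self t)), rfl⟩ :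
            oneAddSubmonoid (Ideal.span {t}))
      rw [← Ideal.jacobson_bot, Ideal.jacobson, Ideal.mem_sInf] at hj
      exact hj ⟨bot_le, hmax⟩
    have htD : algebraMap (integralClosure R A) (integralClosure Z A')
        (algebraMap R (integralClosure R A) t) ∈ m := by
      have e : algebraMap (integralClosure R A) (integralClosure Z A')
        (algebraMap R (integralClosure R A) t) =
          algebraMap Z (integralClosure Z A') (algebraMap R Z t) := by
        rw [← IsScalarTower.algebraMap_apply R (integralClosure R A) (integralClosure Z A')]
        apply Subtype.ext
        change algebraMap R A' t = algebraMap Z A' (algebraMap R Z t)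
        exact IsScalarTower.algebraMap_apply R Z A' t
      rw [e]; exact htZ
    apply hm.ne_top
    rw [Ideal.eq_top_iff_one]
    rw [map_add, map_one, map_mul] at hmem
    exact (Ideal.add_mem_iff_left _ (Ideal.mul_mem_left _ _ htD)).1 hmem

/-- Let `A₀` be a ring with a nonzero divisor `t`, `A := A₀[1/t]`,
`Z := (1+tA₀)⁻¹A₀` the `(t)`-adic Zariskization and `A' := Z[1/t]`.  Then the inclusion of
`A₀` into the integral closure `C := (A₀)⁺_A` of `A₀` in `A` induces a ring isomorphism from
the integral closure of `Z` in `A'` onto the `(t)`-adic Zariskization `(1+tC)⁻¹C` of `C`;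
the isomorphism is compatible with the canonical maps from `C` to both sides. -/
theorem zariskization_integralClosure_iso
    (A₀ : Type*) [CommRing A₀] (t : A₀) (ht : t ∈ nonZeroDivisors A₀) :
    ∃ hmem : ∀ c : ↥(integralClosure A₀ (Localization.Away t)),
        awayToZarAway t (c : Localization.Away t) ∈
          integralClosure (Zariskization (Ideal.span {t}))
            (Localization.Away (algebraMap A₀ (Zariskization (Ideal.span {t})) t)),
      ∃ e : ↥(integralClosure (Zariskization (Ideal.span {t}))
              (Localization.Away (algebraMap A₀ (Zariskization (Ideal.span {t})) t))) ≃+*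
            Zariskization (Ideal.span
              {algebraMap A₀ ↥(integralClosure A₀ (Localization.Away t)) t}),
        ∀ c : ↥(integralClosure A₀ (Localization.Away t)),
          e ⟨awayToZarAway t (c : Localization.Away t), hmem c⟩ =
            algebraMap ↥(integralClosure A₀ (Localization.Away t))
              (Zariskization (Ideal.span
                {algebraMap A₀ ↥(integralClosure A₀ (Localization.Away t)) t})) c := by
  let Z := Zariskization (Ideal.span {t})
  let A := Localization.Away t
  let A' := Localization.Away (algebraMap A₀ (Zariskization (Ideal.span {t})) t)
  let M := oneAddSubmonoid (Ideal.span {t})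
  let iA : Algebra A A' := (awayToZarAway t).toAlgebra
  have hcomp : ∀ a : A₀, awayToZarAway t (algebraMap A₀ A a) =
      algebraMap Z A' (algebraMap A₀ Z a) := fun a => by
    simp only [awayToZarAway, A, Localization.awayLift]
    exact IsLocalization.Away.lift_eq _ _ _
  have tZ : IsScalarTower A₀ Z A' := inferInstance
  have tA : IsScalarTower A₀ A A' := IsScalarTower.of_algebraMap_eq fun a => by
    rw [IsScalarTower.algebraMap_apply A₀ Z A']; exact (hcomp a).symm
  have l1 : IsLocalization (Algebra.algebraMapSubmonoid Z (Submonoid.powers t)) A' := by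
    have : Algebra.algebraMapSubmonoid Z (Submonoid.powers t) =
      Submonoid.powers (algebraMap A₀ Z t) := by
      simp [Algebra.algebraMapSubmonoid, Submonoid.map_powers]
    rw [this]
    infer_instance
  have l2 : IsLocalization (Algebra.algebraMapSubmonoid A M) A' :=
    IsLocalization.commutes A Z A' (Submonoid.powers t) M
  have hmem : ∀ c : ↥(integralClosure A₀ A), awayToZarAway t (c : A) ∈ integralClosure Z A' := by
    intro c
    have h1 : IsIntegral A₀ (algebraMap A A' (c : A)) := IsIntegral.algebraMap c.2
    exact h1.tower_top
  refine ⟨hmem, ?_⟩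
  let f : integralClosure A₀ A →+* integralClosure Z A' :=
    ((awayToZarAway t).comp (algebraMap (integralClosure A₀ A) A)).codRestrict
      (integralClosure Z A') hmem
  let iD : Algebra (integralClosure A₀ A) (integralClosure Z A') := f.toAlgebra
  have t1 : IsScalarTower (integralClosure A₀ A) (integralClosure Z A') A' :=
    ⟨fun c d x => mul_assoc (awayToZarAway t (c : A)) (d : A') x⟩
  have t2 : IsScalarTower A₀ (integralClosure A₀ A) (integralClosure Z A') :=
    IsScalarTower.of_algebraMap_eq fun a => Subtype.ext (IsScalarTower.algebraMap_apply A₀ A A' a)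
  have l3 := zar_aux_loc (R := A₀) (Z := Z) (A := A) (A' := A') t
  let e := IsLocalization.algEquiv
    (oneAddSubmonoid (Ideal.span {algebraMap A₀ (integralClosure A₀ A) t}))
    (integralClosure Z A')
    (Zariskization (Ideal.span {algebraMap A₀ (integralClosure A₀ A) t}))
  exact ⟨e.toRingEquiv, fun c => e.commutes c⟩
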